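/- Let m ∈ ℕ₀ be even and let α > 0. Then the function P(x) = (β^(m)(x))^α is convex on (0, ∞). -/

import Mathlib

/-!
For even `m`, differentiating under the integral sign gives
`β^(m)(x) = ∫₀^∞ t^m e^{-xt} / (1 + e^{-t}) dt` on `(0, ∞)`. Here `β` is seen as the moment
generating function of `t ↦ -t` under the measure with density `1 / (1 + e^{-t})`, so that
`ProbabilityTheory.iteratedDeriv_mgf` applies; the sign `(-1)^m` is `1` as `m` is even.

Such a Laplace transform of a positive weight is positive and log-convex: with `c = log β^(m)(x)`
and `d = log β^(m)(y)`, integrating the pointwise convexity inequality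
`e^{-(ax+by)t - (ac+bd)} ≤ a e^{-xt-c} + b e^{-yt-d}` against the weight gives
`β^(m)(ax+by) ≤ e^{ac+bd}`. The `α`-th power of a log-convex function is again log-convex, hence
convex.
-/

open Real MeasureTheory Set

/-- Nielsen's beta function: `β(x) = ∫₀^∞ e^{-x t} / (1 + e^{-t}) dt`. -/
noncomputable def nielsenBeta (x : ℝ) : ℝ :=
  ∫ t in Set.Ioi (0:ℝ), Real.exp (-x * t) / (1 + Real.exp (-t))

/-- The measure on `(0, ∞)` with density `1 / (1 + e^{-t})`. The density is `ℝ≥0`-valued so that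
integrals against it unfold without finiteness conditions. -/
noncomputable def nielsenMeasure : Measure ℝ :=
  (volume.restrict (Ioi (0:ℝ))).withDensity
    (fun t => ((Real.toNNReal (1 / (1 + Real.exp (-t))) : NNReal) : ENNReal))

lemma measurable_nielsenDensity :
    Measurable (fun t : ℝ => Real.toNNReal (1 / (1 + Real.exp (-t)))) := by
  fun_prop

lemma integral_nielsenMeasure (g : ℝ → ℝ) :
    ∫ t, g t ∂nielsenMeasure = ∫ t in Ioi (0:ℝ), g t / (1 + Real.exp (-t)) := by
  rw [nielsenMeasure, integral_withDensity_eq_integral_smul measurable_nielsenDensity]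
  congr 1
  ext t
  have h : 0 ≤ 1 / (1 + Real.exp (-t)) := by positivity
  rw [NNReal.smul_def, Real.coe_toNNReal _ h, smul_eq_mul]
  ring

lemma nielsenBeta_eq_mgf :
    nielsenBeta = ProbabilityTheory.mgf (fun t : ℝ => -t) nielsenMeasure := by
  ext x
  rw [ProbabilityTheory.mgf, integral_nielsenMeasure, nielsenBeta]
  simp

lemma integrable_exp_nielsenMeasure {x : ℝ} (hx : 0 < x) :
    Integrable (fun t : ℝ => Real.exp (x * -t)) nielsenMeasure := by
  rw [nielsenMeasure, integrable_withDensity_iff_integrable_smul measurable_nielsenDensity]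
  have h1 : IntegrableOn (fun t : ℝ => Real.exp (-x * t)) (Ioi 0) :=
    integrableOn_exp_mul_Ioi (by linarith) 0
  refine Integrable.mono' h1 (Measurable.aestronglyMeasurable ?_) (ae_of_all _ fun t => ?_)
  · exact measurable_nielsenDensity.smul (by fun_prop)
  · have h : 0 ≤ 1 / (1 + Real.exp (-t)) := by positivity
    have h' : 1 / (1 + Real.exp (-t)) ≤ 1 := by
      rw [div_le_one (by positivity)]
      linarith [Real.exp_pos (-t)]
    rw [NNReal.smul_def, Real.coe_toNNReal _ h, smul_eq_mul, Real.norm_of_nonneg (by positivity)]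
    calc _ ≤ 1 * Real.exp (x * -t) := by gcongr
      _ = _ := by ring_nf

lemma mem_interior_integrableExpSet_nielsenMeasure {x : ℝ} (hx : 0 < x) :
    x ∈ interior (ProbabilityTheory.integrableExpSet (fun t : ℝ => -t) nielsenMeasure) :=
  mem_interior.mpr
    ⟨Ioi 0, fun _ hy => integrable_exp_nielsenMeasure (mem_Ioi.mp hy), isOpen_Ioi, hx⟩

lemma integrable_pow_mul_exp_nielsenMeasure (m : ℕ) {x : ℝ} (hx : 0 < x) :
    Integrable (fun t : ℝ => (-t) ^ m * Real.exp (x * -t)) nielsenMeasure :=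
  ProbabilityTheory.integrable_pow_mul_exp_of_mem_interior_integrableExpSet
    (mem_interior_integrableExpSet_nielsenMeasure hx) m

lemma iteratedDeriv_nielsenBeta (m : ℕ) {x : ℝ} (hx : 0 < x) :
    iteratedDeriv m nielsenBeta x = ∫ t, (-t) ^ m * Real.exp (x * -t) ∂nielsenMeasure := by
  rw [nielsenBeta_eq_mgf]
  exact ProbabilityTheory.iteratedDeriv_mgf (mem_interior_integrableExpSet_nielsenMeasure hx) m

lemma iteratedDeriv_nielsenBeta_pos {m : ℕ} (hm : Even m) {x : ℝ} (hx : 0 < x) :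
    0 < iteratedDeriv m nielsenBeta x := by
  have hnn : ∀ t : ℝ, 0 ≤ (-t) ^ m * Real.exp (x * -t) := fun t =>
    mul_nonneg (hm.pow_nonneg _) (Real.exp_pos _).le
  rw [iteratedDeriv_nielsenBeta m hx]
  refine lt_of_le_of_ne (integral_nonneg hnn) fun h => ?_
  have h0 := (integral_eq_zero_iff_of_nonneg hnn (integrable_pow_mul_exp_nielsenMeasure m hx)).mp
    h.symm
  rw [nielsenMeasure, Filter.EventuallyEq,
    ae_withDensity_iff measurable_nielsenDensity.coe_nnreal_ennreal,
    ae_restrict_iff' measurableSet_Ioi] at h0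
  -- The integrand vanishes nowhere on `(0, ∞)`, so that half-line would be a null set.
  have h1 : ∀ᵐ t : ℝ, t ∉ Ioi (0:ℝ) := by
    filter_upwards [h0] with t ht hpos
    have hpos' : 0 < t := hpos
    have hd : ((Real.toNNReal (1 / (1 + Real.exp (-t))) : NNReal) : ENNReal) ≠ 0 := by
      have : 0 < 1 / (1 + Real.exp (-t)) := by positivity
      simpa only [ne_eq, ENNReal.coe_eq_zero, Real.toNNReal_eq_zero, not_le] using this
    exact (mul_ne_zero (pow_ne_zero m (neg_ne_zero.mpr hpos'.ne')) (Real.exp_pos _).ne')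
      (ht hpos hd)
  have h2 : volume (Ioi (0:ℝ)) = 0 :=
    measure_mono_null (fun t ht => not_not.mpr ht) (ae_iff.mp h1)
  simp at h2

/-- Log-convexity of the even derivatives of `β`, in multiplicative form. -/
lemma iteratedDeriv_nielsenBeta_le_exp {m : ℕ} (hm : Even m) {x y a b : ℝ} (hx : 0 < x)
    (hy : 0 < y) (ha : 0 ≤ a) (hb : 0 ≤ b) (hab : a + b = 1) :
    iteratedDeriv m nielsenBeta (a * x + b * y) ≤
      Real.exp (a * Real.log (iteratedDeriv m nielsenBeta x) +
        b * Real.log (iteratedDeriv m nielsenBeta y)) := by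
  have hA := iteratedDeriv_nielsenBeta_pos hm hx
  have hB := iteratedDeriv_nielsenBeta_pos hm hy
  have hz : 0 < a * x + b * y := (convex_Ioi (0:ℝ)) hx hy ha hb hab
  set A := iteratedDeriv m nielsenBeta x with hAdef
  set B := iteratedDeriv m nielsenBeta y with hBdef
  have hIx := (integrable_pow_mul_exp_nielsenMeasure m hx).const_mul (a / A)
  have hIy := (integrable_pow_mul_exp_nielsenMeasure m hy).const_mul (b / B)
  have hIz := (integrable_pow_mul_exp_nielsenMeasure m hz).const_mul
    (Real.exp (-(a * Real.log A + b * Real.log B)))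
  have key := integral_mono hIz (hIx.add hIy) (fun t => by
    have hc := convexOn_exp.2 (mem_univ (x * -t - Real.log A)) (mem_univ (y * -t - Real.log B))
      ha hb hab
    simp only [smul_eq_mul] at hc
    rw [Real.exp_sub, Real.exp_sub, Real.exp_log hA, Real.exp_log hB] at hc
    have hp : 0 ≤ (-t) ^ m := hm.pow_nonneg _
    calc Real.exp (-(a * Real.log A + b * Real.log B)) *
          ((-t) ^ m * Real.exp ((a * x + b * y) * -t))
        = (-t) ^ m * Real.exp (a * (x * -t - Real.log A) + b * (y * -t - Real.log B)) := by
          rw [mul_left_comm, ← Real.exp_add]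
          ring_nf
      _ ≤ (-t) ^ m * (a * (Real.exp (x * -t) / A) + b * (Real.exp (y * -t) / B)) := by gcongr
      _ = a / A * ((-t) ^ m * Real.exp (x * -t)) + b / B * ((-t) ^ m * Real.exp (y * -t)) := by
          ring)
  simp only [Pi.add_apply] at key
  rw [integral_add hIx hIy, integral_const_mul, integral_const_mul, integral_const_mul,
    ← iteratedDeriv_nielsenBeta m hx, ← iteratedDeriv_nielsenBeta m hy,
    ← iteratedDeriv_nielsenBeta m hz, ← hAdef, ← hBdef, div_mul_cancel₀ _ hA.ne',
    div_mul_cancel₀ _ hB.ne', hab, Real.exp_neg, inv_mul_le_iff₀ (Real.exp_pos _), mul_one] at key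
  exact key

theorem convexOn_iteratedDeriv_nielsenBeta_rpow (m : ℕ) (hm : Even m) (α : ℝ) (hα : 0 < α) :
    ConvexOn ℝ (Set.Ioi 0) (fun x : ℝ => iteratedDeriv m nielsenBeta x ^ α) := by
  refine ⟨convex_Ioi 0, fun x hx y hy a b ha hb hab => ?_⟩
  have hx' : 0 < x := hx
  have hy' : 0 < y := hy
  have hz : 0 < a * x + b * y := (convex_Ioi (0:ℝ)) hx hy ha hb hab
  have hA := iteratedDeriv_nielsenBeta_pos hm hx'
  have hB := iteratedDeriv_nielsenBeta_pos hm hy'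
  have hC := iteratedDeriv_nielsenBeta_pos hm hz
  simp only [smul_eq_mul]
  have hc := convexOn_exp.2 (mem_univ (Real.log (iteratedDeriv m nielsenBeta x) * α))
    (mem_univ (Real.log (iteratedDeriv m nielsenBeta y) * α)) ha hb hab
  simp only [smul_eq_mul, ← Real.rpow_def_of_pos hA, ← Real.rpow_def_of_pos hB] at hc
  refine le_trans ?_ hc
  refine (Real.rpow_le_rpow hC.le
    (iteratedDeriv_nielsenBeta_le_exp hm hx' hy' ha hb hab) hα.le).trans_eq ?_
  rw [← Real.exp_mul]
  ring_nf
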